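/- arXiv:1303.1152 — 9 statements merged into one kernel-verified Lean document; each statement's English description precedes it below -/
import Mathlib

section
/- Strong duality for the ℓ2-loss soft-margin SVM: the infimum over all (w̄, ρ, ξ) ∈ ℝ^d × ℝ × ℝⁿ satisfying y_i·⟨w̄, X_i⟩ ≥ ρ − ξ_i for all i ∈ [1..n] of the objective (1/2)‖w̄‖₂² − ρ + (C/2)Σ_i ξ_i² equals −(1/2)·min over α in the unit simplex Δ of αᵀ(ZᵀZ + (1/C)I_n)α, where Z is the d×n matrix with columns Z_i := y_i X_i. Equivalently, the dual optimal value is (up to the factor −1/2) the value min_{α∈Δ} ‖Aα‖₂² of the SVM problem with extended data matrix A := (Z ; (1/√C)I_n) ∈ ℝ^{(d+n)×n}. -/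
open Matrix BigOperators

/-- Euclidean norm of a vector over a finite index type. -/
noncomputable def l2 {ι : Type*} [Fintype ι] (v : ι → ℝ) : ℝ := Real.sqrt (∑ k, v k ^ 2)

/-- The dual quadratic form. -/
noncomputable def qf {d n : ℕ} (C : ℝ) (Z : Matrix (Fin d) (Fin n) ℝ) (α : Fin n → ℝ) : ℝ :=
  ∑ k, (Z.mulVec α k) ^ 2 + (1 / C) * ∑ i, α i ^ 2

lemma qf_eq {d n : ℕ} (C : ℝ) (Z : Matrix (Fin d) (Fin n) ℝ) (α : Fin n → ℝ) :
    α ⬝ᵥ ((Zᵀ * Z + (1/C) • (1 : Matrix (Fin n) (Fin n) ℝ)).mulVec α) = qf C Z α := by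
  have h1 : α ⬝ᵥ ((Zᵀ * Z).mulVec α) = ∑ k, (Z.mulVec α k) ^ 2 := by
    rw [← Matrix.mulVec_mulVec, Matrix.dotProduct_mulVec, Matrix.vecMul_transpose]
    simp [dotProduct, sq]
  rw [Matrix.add_mulVec, dotProduct_add, h1, Matrix.smul_mulVec, Matrix.one_mulVec,
    dotProduct_smul]
  simp [qf, dotProduct, sq]

lemma qf_eq' {d n : ℕ} (C : ℝ) (hC : 0 < C) (Z : Matrix (Fin d) (Fin n) ℝ) (α : Fin n → ℝ) :
    ∑ k, ((Matrix.fromRows Z ((1 / Real.sqrt C) • (1 : Matrix (Fin n) (Fin n) ℝ))).mulVec α k) ^ 2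
      = qf C Z α := by
  rw [Matrix.fromRows_mulVec, Fintype.sum_sum_type]
  simp only [Sum.elim_inl, Sum.elim_inr, Matrix.smul_mulVec, Matrix.one_mulVec, Pi.smul_apply,
    smul_eq_mul, mul_pow, div_pow, Real.sq_sqrt hC.le, ← Finset.mul_sum, one_pow, qf]

lemma qf_line {d n : ℕ} (C : ℝ) (Z : Matrix (Fin d) (Fin n) ℝ) (α β : Fin n → ℝ) (t : ℝ) :
    qf C Z (α + t • β) = qf C Z α
      + 2 * t * (∑ k, Z.mulVec α k * Z.mulVec β k + (1 / C) * ∑ i, α i * β i)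
      + t ^ 2 * qf C Z β := by
  have key : ∀ {m : ℕ} (u v : Fin m → ℝ), ∑ k, (u k + t * v k) ^ 2
      = ∑ k, u k ^ 2 + 2 * t * ∑ k, u k * v k + t ^ 2 * ∑ k, v k ^ 2 := by
    intro m u v
    simp only [Finset.mul_sum, ← Finset.sum_add_distrib]
    exact Finset.sum_congr rfl fun k _ => by ring
  simp only [qf, Matrix.mulVec_add, Matrix.mulVec_smul, Pi.add_apply, Pi.smul_apply, smul_eq_mul,
    key]
  ring

lemma qf_nonneg {d n : ℕ} (C : ℝ) (hC : 0 < C) (Z : Matrix (Fin d) (Fin n) ℝ) (α : Fin n → ℝ) :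
    0 ≤ qf C Z α := by
  unfold qf; positivity

lemma slope_nonneg (a b : ℝ) (hb : 0 ≤ b)
    (h : ∀ t : ℝ, 0 ≤ t → t ≤ 1 → 0 ≤ 2 * t * a + t ^ 2 * b) : 0 ≤ a := by
  by_contra! ha
  have hp : 0 < b - a := by linarith
  have h1 := h (-a / (b - a)) (by apply div_nonneg <;> linarith)
    (by rw [div_le_one hp]; linarith)
  have ht : 0 < -a / (b - a) := by apply div_pos <;> linarith
  have e : (-a / (b - a)) * (b - a) = -a := by field_simp
  set t := -a / (b - a)
  have : 0 ≤ t * (2 * a + t * b) := by linarith [h1, show t * (2 * a + t * b) = 2 * t * a + t ^ 2 * b by ring]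
  have h2 : 0 ≤ 2 * a + t * b := nonneg_of_mul_nonneg_right this ht
  nlinarith

lemma exists_min {d n : ℕ} (hn : 0 < n) (C : ℝ) (hC : 0 < C) (Z : Matrix (Fin d) (Fin n) ℝ) :
    ∃ α : Fin n → ℝ, (∀ i, 0 ≤ α i) ∧ (∑ i, α i = 1) ∧
      (∀ β : Fin n → ℝ, (∀ i, 0 ≤ β i) → (∑ i, β i = 1) → qf C Z α ≤ qf C Z β) ∧
      (∀ i, qf C Z α ≤ ∑ k, Z.mulVec α k * Z k i + (1 / C) * α i) := by
  have hcont : Continuous (qf C Z) := by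
    unfold qf Matrix.mulVec dotProduct; fun_prop
  obtain ⟨α, hα, hmin⟩ := (isCompact_stdSimplex ℝ (Fin n)).exists_isMinOn
    ⟨_, single_mem_stdSimplex ℝ (⟨0, hn⟩ : Fin n)⟩ hcont.continuousOn
  have hmin' : ∀ β ∈ stdSimplex ℝ (Fin n), qf C Z α ≤ qf C Z β := fun β hβ => hmin hβ
  refine ⟨α, hα.1, hα.2, fun β h1 h2 => hmin' β ⟨h1, h2⟩, fun i => ?_⟩
  have hs := slope_nonneg (∑ k, Z.mulVec α k * Z.mulVec (Pi.single i 1 - α) k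
      + (1 / C) * ∑ j, α j * (Pi.single i 1 - α : Fin n → ℝ) j) _ (qf_nonneg C hC Z (Pi.single i 1 - α)) (fun t h0 h1 => by
    have hm := hmin' (α + t • (Pi.single i 1 - α))
      ((convex_stdSimplex ℝ (Fin n)).add_smul_sub_mem hα (single_mem_stdSimplex ℝ i) ⟨h0, h1⟩)
    rw [qf_line] at hm
    linarith)
  have e : ∑ k, Z.mulVec α k * Z.mulVec (Pi.single i 1 - α) k
      + (1 / C) * ∑ j, α j * (Pi.single i 1 - α : Fin n → ℝ) j
      = ∑ k, Z.mulVec α k * Z k i + (1 / C) * α i - qf C Z α := by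
    simp only [Matrix.mulVec_sub, Matrix.mulVec_single_one, Pi.sub_apply, mul_sub,
      Finset.sum_sub_distrib, qf, sq, Matrix.col_apply]
    simp [Pi.single_apply]
    ring
  rw [e] at hs
  linarith

lemma young (C : ℝ) (hC : 0 < C) {m : ℕ} (u v : Fin m → ℝ) :
    ∑ i, u i * v i ≤ (C / 2) * ∑ i, u i ^ 2 + (1 / 2) * ((1 / C) * ∑ i, v i ^ 2) := by
  simp only [Finset.mul_sum, ← Finset.sum_add_distrib]
  refine Finset.sum_le_sum fun i _ => ?_
  have : C / 2 * u i ^ 2 + 1 / 2 * (1 / C * v i ^ 2) - u i * v i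
      = (1 / (2 * C)) * (C * u i - v i) ^ 2 := by field_simp; ring
  have : 0 ≤ (1 / (2 * C)) * (C * u i - v i) ^ 2 := by positivity
  linarith

/-- Strong duality for the ℓ2-loss soft-margin SVM: the infimum of the primal objective
`(1/2)‖w̄‖² − ρ + (C/2)Σᵢ ξᵢ²` over all feasible `(w̄, ρ, ξ)` equals
`−(1/2) · min_{α ∈ Δ} αᵀ(ZᵀZ + (1/C)I_n)α`; moreover the latter minimum expression equals
`min_{α ∈ Δ} ‖Aα‖₂²` for the extended matrix `A = (Z ; (1/√C)I_n)`. -/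
theorem soft_margin_strong_duality {d n : ℕ} (hn : 0 < n) (C : ℝ) (hC : 0 < C)
    (X : Fin n → Fin d → ℝ) (y : Fin n → ℝ) (hy : ∀ i, y i = 1 ∨ y i = -1) :
    let Z : Matrix (Fin d) (Fin n) ℝ := Matrix.of fun k i => y i * X i k
    let A : Matrix (Fin d ⊕ Fin n) (Fin n) ℝ :=
      Matrix.fromRows Z ((1 / Real.sqrt C) • (1 : Matrix (Fin n) (Fin n) ℝ))
    sInf {v : ℝ | ∃ (wb : Fin d → ℝ) (ρ : ℝ) (ξ : Fin n → ℝ),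
        (∀ i, y i * (wb ⬝ᵥ X i) ≥ ρ - ξ i) ∧
        v = (1/2) * ∑ k, wb k ^ 2 - ρ + (C/2) * ∑ i, ξ i ^ 2} =
      -(1/2) * sInf {v : ℝ | ∃ α : Fin n → ℝ, (∀ i, 0 ≤ α i) ∧ (∑ i, α i = 1) ∧
        v = α ⬝ᵥ ((Zᵀ * Z + (1/C) • (1 : Matrix (Fin n) (Fin n) ℝ)).mulVec α)} ∧
    sInf {v : ℝ | ∃ α : Fin n → ℝ, (∀ i, 0 ≤ α i) ∧ (∑ i, α i = 1) ∧
        v = α ⬝ᵥ ((Zᵀ * Z + (1/C) • (1 : Matrix (Fin n) (Fin n) ℝ)).mulVec α)} =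
      sInf {v : ℝ | ∃ α : Fin n → ℝ, (∀ i, 0 ≤ α i) ∧ (∑ i, α i = 1) ∧
        v = ∑ k, (A.mulVec α k) ^ 2} := by
  intro Z A
  have hA : ∀ α : Fin n → ℝ, ∑ k, (A.mulVec α k) ^ 2 = qf C Z α := qf_eq' C hC Z
  simp only [qf_eq, hA, and_true]
  obtain ⟨α, h0, h1, hmin, hkkt⟩ := exists_min hn C hC Z
  have hd : IsLeast {v : ℝ | ∃ α : Fin n → ℝ, (∀ i, 0 ≤ α i) ∧ (∑ i, α i = 1) ∧
      v = qf C Z α} (qf C Z α) := by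
    refine ⟨⟨α, h0, h1, rfl⟩, ?_⟩
    rintro v ⟨β, hb0, hb1, rfl⟩
    exact hmin β hb0 hb1
  rw [hd.csInf_eq]
  have hcol : ∀ (w : Fin d → ℝ) i, y i * (w ⬝ᵥ X i) = ∑ k, w k * Z k i := by
    intro w i
    simp only [dotProduct, Finset.mul_sum, Z, Matrix.of_apply]
    exact Finset.sum_congr rfl fun k _ => by ring
  refine IsLeast.csInf_eq ⟨⟨Z.mulVec α, qf C Z α, fun i => (1 / C) * α i, ?_, ?_⟩, ?_⟩
  · intro i
    rw [hcol]
    have := hkkt i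
    linarith
  · simp only [mul_pow, ← Finset.mul_sum, qf]
    field_simp
    ring
  · rintro v ⟨w, ρ, ξ, hf, rfl⟩
    have e1 : ρ ≤ ∑ i, α i * (∑ k, w k * Z k i + ξ i) := by
      calc ρ = ∑ i, α i * ρ := by rw [← Finset.sum_mul, h1, one_mul]
        _ ≤ _ := Finset.sum_le_sum fun i _ => by
          have := hf i
          rw [hcol] at this
          exact mul_le_mul_of_nonneg_left (by linarith) (h0 i)
    have e2 : ∑ i, α i * (∑ k, w k * Z k i + ξ i)
        = ∑ k, w k * Z.mulVec α k + ∑ i, ξ i * α i := by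
      simp only [mul_add, Finset.sum_add_distrib, Matrix.mulVec, dotProduct, Finset.mul_sum]
      rw [Finset.sum_comm]
      congr 1
      · exact Finset.sum_congr rfl fun k _ => Finset.sum_congr rfl fun i _ => by ring
      · exact Finset.sum_congr rfl fun k _ => by ring
    have y1 := young 1 one_pos w (Z.mulVec α)
    have y2 := young C hC ξ α
    simp only [qf]
    linarith
end

section
/- (Separation Lemma, part i) The image of the filled simplex lies in the interior of the cone of angle arccos(σ/D) around w: for every x ∈ ℝⁿ with x ≥ 0 entrywise, Σ_i x_i ≤ 1, and x ≠ 0, it holds that ⟨Ax, w⟩ > (σ/D)·‖Ax‖₂·‖w‖₂ (in particular ⟨Ax, w⟩ > 0). -/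
open Matrix BigOperators

/-- Separation Lemma, part i: if `w` is σ-weakly-separating for `A` (σ > 0) and
`‖Aᵢ‖₂ < D` for all columns, then the image of the filled simplex (minus the origin) lies
in the interior of the cone of angle `arccos(σ/D)` around `w`:
`⟨Ax, w⟩ > (σ/D)·‖Ax‖₂·‖w‖₂ > 0`. -/
theorem separation_cone_i {d n : ℕ} (hn : 0 < n) (A : Matrix (Fin d) (Fin n) ℝ)
    (σ D : ℝ) (hσ : 0 < σ) (hD : 0 < D)
    (w : Fin d → ℝ) (hw : w ≠ 0)
    (hsep : ∀ i, (Aᵀ i) ⬝ᵥ w / l2 w ≥ σ)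
    (hAD : ∀ i, l2 (Aᵀ i) < D)
    (x : Fin n → ℝ) (hx0 : ∀ i, 0 ≤ x i) (hx1 : ∑ i, x i ≤ 1) (hx : x ≠ 0) :
    (A.mulVec x) ⬝ᵥ w > (σ / D) * l2 (A.mulVec x) * l2 w ∧
    (A.mulVec x) ⬝ᵥ w > 0 := by
  have hS : 0 < ∑ i, x i := by
    obtain ⟨j, hj⟩ := Function.ne_iff.mp hx
    exact Finset.sum_pos' (fun i _ => hx0 i)
      ⟨j, Finset.mem_univ j, lt_of_le_of_ne (hx0 j) (Ne.symm hj)⟩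
  have l2_eq : ∀ v : Fin d → ℝ, l2 v = ‖WithLp.toLp 2 v‖ := by
    intro v
    simp [l2, EuclideanSpace.norm_eq]
  have hwpos : 0 < l2 w := by
    rw [l2_eq, norm_pos_iff]
    intro h
    apply hw
    simpa using h
  have hmul : A.mulVec x = ∑ i, x i • Aᵀ i := by
    ext k
    simp [Matrix.mulVec, dotProduct, Finset.sum_apply, mul_comm]
  have hinner : (∑ i, x i) * (σ * l2 w) ≤ (A.mulVec x) ⬝ᵥ w := by
    rw [hmul, sum_dotProduct, Finset.sum_mul]
    refine Finset.sum_le_sum fun i _ => ?_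
    rw [smul_dotProduct, smul_eq_mul]
    exact mul_le_mul_of_nonneg_left ((le_div_iff₀ hwpos).mp (hsep i)) (hx0 i)
  have hnorm : l2 (A.mulVec x) < (∑ i, x i) * D := by
    have h1 : l2 (A.mulVec x) ≤ ∑ i, x i * l2 (Aᵀ i) := by
      rw [l2_eq, hmul, WithLp.toLp_sum]
      refine (norm_sum_le _ _).trans (Finset.sum_le_sum fun i _ => ?_)
      rw [WithLp.toLp_smul, norm_smul, Real.norm_of_nonneg (hx0 i), l2_eq]
    refine h1.trans_lt ?_
    rw [Finset.sum_mul]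
    obtain ⟨j, hj⟩ := Function.ne_iff.mp hx
    exact Finset.sum_lt_sum
      (fun i _ => mul_le_mul_of_nonneg_left (hAD i).le (hx0 i))
      ⟨j, Finset.mem_univ j,
        mul_lt_mul_of_pos_left (hAD j) (lt_of_le_of_ne (hx0 j) (Ne.symm hj))⟩
  constructor
  · refine lt_of_lt_of_le ?_ hinner
    have h2 : σ / D * l2 (A.mulVec x) < σ / D * ((∑ i, x i) * D) :=
      mul_lt_mul_of_pos_left hnorm (div_pos hσ hD)
    have h3 : σ / D * ((∑ i, x i) * D) = (∑ i, x i) * σ := by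
      field_simp
    rw [h3] at h2
    calc σ / D * l2 (A.mulVec x) * l2 w < (∑ i, x i) * σ * l2 w :=
          mul_lt_mul_of_pos_right h2 hwpos
      _ = _ := by ring
  · exact lt_of_lt_of_le (by positivity) hinner
end

section
/- (Separation Lemma, part ii) Any vector in the cone of angle arcsin(σ/D) around w is still weakly-separating for A: if v ∈ ℝ^d is nonzero and ⟨v, w⟩ ≥ √(1 − (σ/D)²)·‖v‖₂·‖w‖₂, then there exists σ' > 0 such that ⟨A_i, v⟩/‖v‖₂ ≥ σ' for all i ∈ [1..n]; equivalently, ⟨A_i, v⟩ > 0 for every i. -/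
open Matrix BigOperators

theorem l2_sq_aux {ι : Type*} [Fintype ι] (v : ι → ℝ) : l2 v ^ 2 = v ⬝ᵥ v := by
  unfold l2
  rw [Real.sq_sqrt (Finset.sum_nonneg fun k _ => sq_nonneg _)]
  simp [dotProduct, sq]

theorem l2_pos_aux {ι : Type*} [Fintype ι] (v : ι → ℝ) (hv : v ≠ 0) : 0 < l2 v := by
  have h0 : 0 ≤ l2 v := Real.sqrt_nonneg _
  rcases h0.lt_or_eq with h | h
  · exact h
  · exfalso
    have := l2_sq_aux v
    rw [← h] at this
    exact hv (dotProduct_self_eq_zero.1 (by linarith))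

theorem cs_aux {ι : Type*} [Fintype ι] (a b : ι → ℝ) :
    (a ⬝ᵥ b) ^ 2 ≤ (a ⬝ᵥ a) * (b ⬝ᵥ b) := by
  have := Finset.sum_mul_sq_le_sq_mul_sq Finset.univ a b
  simpa [dotProduct, sq] using this

theorem gram_aux {ι : Type*} [Fintype ι] (a v w : ι → ℝ) (hN : 0 < w ⬝ᵥ w) :
    ((w ⬝ᵥ w) * (a ⬝ᵥ v) - (a ⬝ᵥ w) * (v ⬝ᵥ w)) ^ 2 ≤
      ((w ⬝ᵥ w) * (a ⬝ᵥ a) - (a ⬝ᵥ w) ^ 2) * ((w ⬝ᵥ w) * (v ⬝ᵥ v) - (v ⬝ᵥ w) ^ 2) := by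
  have h := cs_aux ((w ⬝ᵥ w) • a - (a ⬝ᵥ w) • w) ((w ⬝ᵥ w) • v - (v ⬝ᵥ w) • w)
  simp only [sub_dotProduct, dotProduct_sub, smul_dotProduct, dotProduct_smul, smul_eq_mul,
    dotProduct_comm w a, dotProduct_comm w v] at h
  have h2 : 0 < (w ⬝ᵥ w) ^ 2 := by positivity
  refine le_of_mul_le_mul_left ?_ h2
  linarith

theorem pos_aux {ι : Type*} [Fintype ι] (a v w : ι → ℝ) (σ D : ℝ) (hσ : 0 < σ) (hD : 0 < D)
    (hw : w ≠ 0) (hsep : a ⬝ᵥ w / l2 w ≥ σ) (hAD : l2 a < D) (hv : v ≠ 0)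
    (hvw : v ⬝ᵥ w ≥ Real.sqrt (1 - (σ / D) ^ 2) * l2 v * l2 w) : 0 < a ⬝ᵥ v := by
  have hW := l2_pos_aux w hw
  have hV := l2_pos_aux v hv
  have ha0 : 0 ≤ l2 a := Real.sqrt_nonneg _
  have g := gram_aux a v w (by rw [← l2_sq_aux]; positivity)
  rw [← l2_sq_aux, ← l2_sq_aux, ← l2_sq_aux] at g
  have hX : σ * l2 w ≤ a ⬝ᵥ w := (le_div_iff₀ hW).1 hsep
  set c := Real.sqrt (1 - (σ / D) ^ 2) with hc
  have hc0 : 0 ≤ c := Real.sqrt_nonneg _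
  have hc2 : 1 - (σ / D) ^ 2 ≤ c ^ 2 := by
    rcases le_total 0 (1 - (σ / D) ^ 2) with h | h
    · rw [hc, Real.sq_sqrt h]
    · exact h.trans (sq_nonneg _)
  generalize a ⬝ᵥ w = X at *
  generalize v ⬝ᵥ w = Y at *
  generalize a ⬝ᵥ v = Z at *
  generalize l2 w = W at *
  generalize l2 v = V at *
  generalize l2 a = P at *
  by_contra! hZ
  have hY0 : 0 ≤ Y := le_trans (by positivity) hvw
  have hX0 : 0 ≤ X := le_trans (by positivity) hX
  have hX2 : (σ * W) ^ 2 ≤ X ^ 2 := pow_le_pow_left₀ (by positivity) hX 2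
  have hY2 : (c * V * W) ^ 2 ≤ Y ^ 2 := pow_le_pow_left₀ (by positivity) hvw 2
  have h1 : (X * Y) ^ 2 ≤ (W ^ 2 * Z - X * Y) ^ 2 := by
    have : 0 ≤ X * Y := by positivity
    have h3 : W ^ 2 * Z ≤ 0 := mul_nonpos_of_nonneg_of_nonpos (by positivity) hZ
    nlinarith
  have h2 : P ^ 2 * Y ^ 2 + V ^ 2 * X ^ 2 ≤ W ^ 2 * P ^ 2 * V ^ 2 := by
    refine le_of_mul_le_mul_left ?_ (pow_pos hW 2)
    linarith
  have h3 : P ^ 2 * c ^ 2 + σ ^ 2 ≤ P ^ 2 := by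
    refine le_of_mul_le_mul_left ?_ (show 0 < V ^ 2 * W ^ 2 by positivity)
    have e1 := mul_le_mul_of_nonneg_left hY2 (sq_nonneg P)
    have e2 := mul_le_mul_of_nonneg_left hX2 (sq_nonneg V)
    linarith
  have h4 : σ ^ 2 ≤ P ^ 2 * (σ / D) ^ 2 := by
    have := mul_le_mul_of_nonneg_left hc2 (sq_nonneg P)
    linarith
  have h5 : P ^ 2 * (σ / D) ^ 2 < D ^ 2 * (σ / D) ^ 2 :=
    mul_lt_mul_of_pos_right (pow_lt_pow_left₀ hAD ha0 (by norm_num)) (by positivity)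
  have h6 : D ^ 2 * (σ / D) ^ 2 = σ ^ 2 := by field_simp
  linarith

/-- Separation Lemma, part ii: if `w` is σ-weakly-separating for `A` (σ > 0, `‖Aᵢ‖₂ < D`),
then any nonzero vector `v` in the cone of angle `arcsin(σ/D)` around `w`, i.e. with
`⟨v, w⟩ ≥ √(1 − (σ/D)²)·‖v‖₂·‖w‖₂`, is still σ'-weakly-separating for `A` for some
`σ' > 0`; equivalently `⟨Aᵢ, v⟩ > 0` for every `i`. -/
theorem separation_cone_ii {d n : ℕ} (hn : 0 < n) (A : Matrix (Fin d) (Fin n) ℝ)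
    (σ D : ℝ) (hσ : 0 < σ) (hD : 0 < D)
    (w : Fin d → ℝ) (hw : w ≠ 0)
    (hsep : ∀ i, (Aᵀ i) ⬝ᵥ w / l2 w ≥ σ)
    (hAD : ∀ i, l2 (Aᵀ i) < D)
    (v : Fin d → ℝ) (hv : v ≠ 0)
    (hvw : v ⬝ᵥ w ≥ Real.sqrt (1 - (σ / D) ^ 2) * l2 v * l2 w) :
    (∃ σ' > 0, ∀ i, (Aᵀ i) ⬝ᵥ v / l2 v ≥ σ') ∧ (∀ i, (Aᵀ i) ⬝ᵥ v > 0) := by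
  have hpos : ∀ i, (Aᵀ i) ⬝ᵥ v > 0 := fun i =>
    pos_aux (Aᵀ i) v w σ D hσ hD hw (hsep i) (hAD i) hv hvw
  refine ⟨?_, hpos⟩
  haveI : Nonempty (Fin n) := ⟨⟨0, hn⟩⟩
  obtain ⟨i0, h0⟩ := Finite.exists_min fun i => (Aᵀ i) ⬝ᵥ v / l2 v
  exact ⟨_, div_pos (hpos i0) (l2_pos_aux v hv), h0⟩
end

section
/- For every δ in the filled simplex ▲ with δ ≠ 0, the vector v := −Ãδ is nonzero and lies in the cone of angle arcsin(σ/D) around w, i.e. ⟨v, w⟩ > √(1 − (σ/D)²)·‖v‖₂·‖w‖₂. (Equivalently: the point −Ãδ/(Σ_i δ_i) lies in the open Euclidean ball of radius D around −b̃, and this whole ball is contained in that cone.) -/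
open Matrix BigOperators

lemma cone_aux {E : Type*} [NormedAddCommGroup E] [InnerProductSpace ℝ E] (w a : E) (hw : w ≠ 0)
    (σ D s : ℝ) (hσ : 0 < σ) (hσD : σ < D) (hs : 0 < s) (ha : ‖a‖ < s * D) :
    Real.sqrt (1 - (σ / D) ^ 2) * ‖(s * (D ^ 2 / σ) / ‖w‖) • w - a‖ * ‖w‖ <
      inner ℝ ((s * (D ^ 2 / σ) / ‖w‖) • w - a) w := by
  have hD : 0 < D := hσ.trans hσD
  have hW : 0 < ‖w‖ := norm_pos_iff.mpr hw
  obtain ⟨p, hp⟩ : ∃ p : ℝ, inner ℝ a w = p * ‖w‖ := ⟨inner ℝ a w / ‖w‖, by field_simp⟩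
  have hpa : p ≤ ‖a‖ := by
    have := real_inner_le_norm a w
    rw [hp] at this
    exact le_of_mul_le_mul_right this hW
  obtain ⟨c, hc⟩ : ∃ c : ℝ, c = D ^ 2 / σ := ⟨_, rfl⟩
  obtain ⟨r, hr⟩ : ∃ r : ℝ, r = σ / D := ⟨_, rfl⟩
  have hrc : r * c = D := by rw [hr, hc]; field_simp
  have hrD : r * D = σ := by rw [hr]; field_simp
  have hr0 : 0 < r := by rw [hr]; positivity
  have hr1 : r < 1 := by rw [hr]; exact (div_lt_one hD).mpr hσD
  have hc0 : 0 < c := by rw [hc]; positivity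
  have hDc : D < c := by nlinarith
  rw [← hc, ← hr]
  have hin : inner ℝ ((s * c / ‖w‖) • w - a) w = (s * c - p) * ‖w‖ := by
    rw [inner_sub_left, real_inner_smul_left, real_inner_self_eq_norm_sq, hp]
    field_simp
  have hno : ‖(s * c / ‖w‖) • w - a‖ ^ 2 = (s * c) ^ 2 - 2 * (s * c) * p + ‖a‖ ^ 2 := by
    rw [norm_sub_sq_real, real_inner_smul_left, real_inner_comm, hp, norm_smul, mul_pow,
      Real.norm_eq_abs, sq_abs]
    field_simp
  rw [hin]
  have hpos : 0 < s * c - p := by nlinarith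
  have hk : 0 < 1 - r ^ 2 := by nlinarith
  refine mul_lt_mul_of_pos_right ?_ hW
  refine lt_of_pow_lt_pow_left₀ 2 hpos.le ?_
  rw [mul_pow, Real.sq_sqrt hk.le, hno]
  have h2 : 0 < (s * D) ^ 2 - ‖a‖ ^ 2 := by nlinarith [norm_nonneg a]
  have key : (s * c - p) ^ 2 - (1 - r ^ 2) * ((s * c) ^ 2 - 2 * (s * c) * p + ‖a‖ ^ 2)
      = (p - s * σ) ^ 2 + (1 - r ^ 2) * ((s * D) ^ 2 - ‖a‖ ^ 2) := by
    rw [← hrD, ← hrc]; ring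
  nlinarith [mul_pos hk h2, sq_nonneg (p - s * σ)]

lemma l2_eq_norm {d : ℕ} (v : Fin d → ℝ) : l2 v = ‖WithLp.toLp 2 v‖ := by
  simp [l2, EuclideanSpace.norm_eq]

lemma dot_eq_inner {d : ℕ} (v w : Fin d → ℝ) :
    v ⬝ᵥ w = inner ℝ (WithLp.toLp 2 v) (WithLp.toLp 2 w) := by
  simp [PiLp.inner_apply, dotProduct, mul_comm]

/-- For every nonzero `δ` in the filled simplex, the vector `v = −Ãδ` is nonzero and lies
(strictly) in the cone of angle `arcsin(σ/D)` around `w`: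
`⟨v, w⟩ > √(1 − (σ/D)²)·‖v‖₂·‖w‖₂`. Here `b̃ = −(D²/σ)·w/‖w‖₂` and `Ã = A + b̃·1ᵀ`. -/
theorem neg_image_in_cone {d n : ℕ} (hn : 0 < n) (A : Matrix (Fin d) (Fin n) ℝ)
    (σ D : ℝ) (hσ : 0 < σ) (hD : 0 < D)
    (w : Fin d → ℝ) (hw : w ≠ 0)
    (hsep : ∀ i, (Aᵀ i) ⬝ᵥ w / l2 w ≥ σ)
    (hAD : ∀ i, l2 (Aᵀ i) < D)
    (δ : Fin n → ℝ) (hδ0 : ∀ i, 0 ≤ δ i) (hδ1 : ∑ i, δ i ≤ 1) (hδ : δ ≠ 0) :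
    let bt : Fin d → ℝ := fun k => -(D ^ 2 / σ) * (w k / l2 w)
    let Atil : Matrix (Fin d) (Fin n) ℝ := Matrix.of fun k i => A k i + bt k
    let v : Fin d → ℝ := -(Atil.mulVec δ)
    v ≠ 0 ∧ v ⬝ᵥ w > Real.sqrt (1 - (σ / D) ^ 2) * l2 v * l2 w := by
  intro bt Atil v
  have hw' : WithLp.toLp 2 w ≠ 0 := by simpa using hw
  have hW : 0 < ‖WithLp.toLp 2 w‖ := norm_pos_iff.mpr hw'
  have hσD : σ < D := by
    have h1 := hsep ⟨0, hn⟩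
    have h2 := hAD ⟨0, hn⟩
    rw [dot_eq_inner, l2_eq_norm, ge_iff_le, le_div_iff₀ hW] at h1
    rw [l2_eq_norm] at h2
    have h3 := h1.trans (real_inner_le_norm _ _)
    exact (le_of_mul_le_mul_right h3 hW).trans_lt h2
  obtain ⟨j, hj⟩ : ∃ j, δ j ≠ 0 := Function.ne_iff.mp hδ
  have hj' : 0 < δ j := lt_of_le_of_ne (hδ0 j) (Ne.symm hj)
  have hs : 0 < ∑ i, δ i := Finset.sum_pos' (fun i _ => hδ0 i) ⟨j, Finset.mem_univ _, hj'⟩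
  have ha : ‖∑ i, δ i • WithLp.toLp 2 (Aᵀ i)‖ < (∑ i, δ i) * D := by
    refine (norm_sum_le _ _).trans_lt ?_
    rw [Finset.sum_mul]
    have hn' : ∀ i, ‖δ i • WithLp.toLp 2 (Aᵀ i)‖ = δ i * l2 (Aᵀ i) := fun i => by
      rw [norm_smul, Real.norm_of_nonneg (hδ0 i), l2_eq_norm]
    refine Finset.sum_lt_sum (fun i _ => ?_) ⟨j, Finset.mem_univ _, ?_⟩
    · rw [hn']; exact mul_le_mul_of_nonneg_left (hAD i).le (hδ0 i)
    · rw [hn']; exact mul_lt_mul_of_pos_left (hAD j) hj'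
  have hv : WithLp.toLp 2 v = ((∑ i, δ i) * (D ^ 2 / σ) / ‖WithLp.toLp 2 w‖) • WithLp.toLp 2 w
      - ∑ i, δ i • WithLp.toLp 2 (Aᵀ i) := by
    ext k
    have e : v k = -∑ i, (A k i + -(D ^ 2 / σ) * (w k / l2 w)) * δ i := rfl
    have e2 : (∑ i, δ i • WithLp.toLp 2 (Aᵀ i)) k = ∑ i, δ i * A k i := by simp
    change v k = (∑ i, δ i) * (D ^ 2 / σ) / ‖WithLp.toLp 2 w‖ * w k
      - (∑ i, δ i • WithLp.toLp 2 (Aᵀ i)) k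
    rw [e, e2, ← l2_eq_norm]
    simp only [add_mul, Finset.sum_add_distrib, ← Finset.mul_sum, mul_comm (δ _)]
    ring
  have main := cone_aux (WithLp.toLp 2 w) _ hw' σ D _ hσ hσD hs ha
  rw [← hv, ← dot_eq_inner, ← l2_eq_norm, ← l2_eq_norm] at main
  refine ⟨fun h0 => ?_, main⟩
  rw [h0] at main
  simp [l2] at main
end

section
/- (Key technical lemma) For every pair of vectors x, δ in the filled simplex ▲ with δ ≠ 0, it holds that ⟨Ãx − b̃, −Ãδ⟩ > 0. -/
open Matrix BigOperators

theorem dot_le_l2 {ι : Type*} [Fintype ι] (v z : ι → ℝ) : v ⬝ᵥ z ≤ l2 v * l2 z :=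
  Real.sum_mul_le_sqrt_mul_sqrt Finset.univ v z

/-- Key technical lemma: with `b̃ = −(D²/σ)·w/‖w‖₂` and `Ã = A + b̃·1ᵀ`, for every pair
of vectors `x, δ` in the filled simplex with `δ ≠ 0`, one has `⟨Ãx − b̃, −Ãδ⟩ > 0`. -/
theorem key_inner_positive {d n : ℕ} (hn : 0 < n) (A : Matrix (Fin d) (Fin n) ℝ)
    (σ D : ℝ) (hσ : 0 < σ) (hD : 0 < D)
    (w : Fin d → ℝ) (hw : w ≠ 0)
    (hsep : ∀ i, (Aᵀ i) ⬝ᵥ w / l2 w ≥ σ)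
    (hAD : ∀ i, l2 (Aᵀ i) < D)
    (x δ : Fin n → ℝ)
    (hx0 : ∀ i, 0 ≤ x i) (hx1 : ∑ i, x i ≤ 1)
    (hδ0 : ∀ i, 0 ≤ δ i) (hδ1 : ∑ i, δ i ≤ 1) (hδ : δ ≠ 0) :
    let bt : Fin d → ℝ := fun k => -(D ^ 2 / σ) * (w k / l2 w)
    let Atil : Matrix (Fin d) (Fin n) ℝ := Matrix.of fun k i => A k i + bt k
    (Atil.mulVec x - bt) ⬝ᵥ (-(Atil.mulVec δ)) > 0 := by
  intro bt Atil
  have hl : 0 < l2 w := by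
    obtain ⟨k, hk⟩ := Function.ne_iff.mp hw
    apply Real.sqrt_pos.mpr
    apply Finset.sum_pos' (fun i _ => sq_nonneg _)
    exact ⟨k, Finset.mem_univ _, by have : w k ≠ 0 := hk; positivity⟩
  obtain ⟨u, hu⟩ : ∃ u : Fin d → ℝ, u = fun k => w k / l2 w := ⟨_, rfl⟩
  obtain ⟨c, hc⟩ : ∃ c : ℝ, c = D ^ 2 / σ := ⟨_, rfl⟩
  have hcσ : c * σ = D ^ 2 := by rw [hc]; field_simp
  have hc0 : 0 < c := by rw [hc]; positivity
  have hp : ∀ v : Fin d → ℝ, v ⬝ᵥ u = v ⬝ᵥ w / l2 w := by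
    intro v
    simp only [dotProduct, hu, Finset.sum_div, mul_div_assoc]
  have hww : w ⬝ᵥ w = l2 w * l2 w := by
    unfold l2
    rw [Real.mul_self_sqrt (Finset.sum_nonneg fun i _ => sq_nonneg _)]
    simp [dotProduct, sq]
  have huu : u ⬝ᵥ u = 1 := by
    rw [hp, dotProduct_comm, hp, hww]; field_simp
  have hpσ : ∀ i, σ ≤ Aᵀ i ⬝ᵥ u := fun i => by rw [hp]; exact hsep i
  have hpD : ∀ i, Aᵀ i ⬝ᵥ u < D := fun i => by
    rw [hp, div_lt_iff₀ hl]
    exact (dot_le_l2 _ _).trans_lt (mul_lt_mul_of_pos_right (hAD i) hl)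
  have haD : ∀ i j, Aᵀ i ⬝ᵥ Aᵀ j < D ^ 2 := fun i j => by
    have h0 : ∀ i, 0 ≤ l2 (Aᵀ i) := fun i => Real.sqrt_nonneg _
    refine (dot_le_l2 _ _).trans_lt ?_
    rw [sq]
    exact mul_lt_mul'' (hAD i) (hAD j) (h0 i) (h0 j)
  have hDc : D < c := by
    have := (hpσ ⟨0, hn⟩).trans_lt (hpD ⟨0, hn⟩)
    rw [hc, lt_div_iff₀ hσ]
    nlinarith
  have hy : Atil.mulVec x - bt = ∑ i, x i • Aᵀ i + ((1 - ∑ i, x i) * c) • u := by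
    ext k
    simp only [Atil, bt, mulVec, dotProduct, hu, ← hc, Matrix.of_apply, Pi.sub_apply, Pi.add_apply,
      Finset.sum_apply, Pi.smul_apply, smul_eq_mul, Matrix.transpose_apply, add_mul,
      Finset.sum_add_distrib, ← Finset.mul_sum]
    rw [Finset.sum_congr rfl fun i _ => mul_comm (A k i) (x i)]
    ring
  have hz : -(Atil.mulVec δ) = ∑ j, δ j • (c • u - Aᵀ j) := by
    ext k
    simp only [Atil, bt, mulVec, dotProduct, hu, ← hc, Matrix.of_apply, Pi.neg_apply, Pi.sub_apply,
      Finset.sum_apply, Pi.smul_apply, smul_eq_mul, Matrix.transpose_apply]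
    rw [← Finset.sum_neg_distrib]
    refine Finset.sum_congr rfl fun i _ => ?_
    ring
  have hG : ∀ j, 0 < (Atil.mulVec x - bt) ⬝ᵥ (c • u - Aᵀ j) := by
    intro j
    have hco : ∀ i, 0 < Aᵀ i ⬝ᵥ (c • u - Aᵀ j) := fun i => by
      rw [dotProduct_sub, dotProduct_smul, smul_eq_mul]
      nlinarith [haD i j, hpσ i]
    have hcu : 0 < u ⬝ᵥ (c • u - Aᵀ j) := by
      rw [dotProduct_sub, dotProduct_smul, smul_eq_mul, huu, dotProduct_comm u]
      linarith [hpD j]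
    rw [hy, add_dotProduct, sum_dotProduct, smul_dotProduct]
    simp only [smul_dotProduct, smul_eq_mul]
    have hnn : ∀ i ∈ Finset.univ, 0 ≤ x i * (Aᵀ i ⬝ᵥ (c • u - Aᵀ j)) :=
      fun i _ => mul_nonneg (hx0 i) (hco i).le
    by_cases hs : ∑ i, x i < 1
    · have h1 : 0 < 1 - ∑ i, x i := by linarith
      exact add_pos_of_nonneg_of_pos (Finset.sum_nonneg hnn) (by positivity)
    · have h1 : 0 ≤ 1 - ∑ i, x i := by linarith
      refine add_pos_of_pos_of_nonneg ?_ (by positivity)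
      obtain ⟨i, -, hi⟩ := Finset.exists_ne_zero_of_sum_ne_zero
        (show ∑ i, x i ≠ 0 by linarith)
      exact Finset.sum_pos' hnn ⟨i, Finset.mem_univ _,
        mul_pos (lt_of_le_of_ne (hx0 i) (Ne.symm hi)) (hco i)⟩
  rw [hz, dotProduct_sum]
  simp only [dotProduct_smul, smul_eq_mul]
  obtain ⟨j, hj⟩ := Function.ne_iff.mp hδ
  exact Finset.sum_pos' (fun i _ => mul_nonneg (hδ0 i) (hG i).le) ⟨j, Finset.mem_univ _,
    mul_pos (lt_of_le_of_ne (hδ0 j) (Ne.symm hj)) (hG j)⟩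
end

section
/- (Scaling up improves for non-negative vectors) Let x ∈ ℝⁿ lie in the filled simplex ▲ with x ≠ 0 and Σ_i x_i < 1, and let x' := x/(Σ_i x_i) be its rescaling onto the unit simplex Δ. Then x' ∈ Δ and x' is a strictly better solution of the Lasso instance (Ã, b̃): ‖Ãx' − b̃‖₂ < ‖Ãx − b̃‖₂. -/
open Matrix BigOperators

/-- Scaling up improves for non-negative vectors: if `x ≠ 0` lies in the filled simplex
with `Σᵢ xᵢ < 1`, then its rescaling `x' = x / (Σᵢ xᵢ)` lies in the unit simplex and is a
strictly better solution of the Lasso instance `(Ã, b̃)`, where `b̃ = −(D²/σ)·w/‖w‖₂` and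
`Ã = A + b̃·1ᵀ`. -/
theorem scaling_improves {d n : ℕ} (hn : 0 < n) (A : Matrix (Fin d) (Fin n) ℝ)
    (σ D : ℝ) (hσ : 0 < σ) (hD : 0 < D)
    (w : Fin d → ℝ) (hw : w ≠ 0)
    (hsep : ∀ i, (Aᵀ i) ⬝ᵥ w / l2 w ≥ σ)
    (hAD : ∀ i, l2 (Aᵀ i) < D)
    (x : Fin n → ℝ) (hx0 : ∀ i, 0 ≤ x i) (hx1 : ∑ i, x i < 1) (hx : x ≠ 0) :
    let bt : Fin d → ℝ := fun k => -(D ^ 2 / σ) * (w k / l2 w)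
    let Atil : Matrix (Fin d) (Fin n) ℝ := Matrix.of fun k i => A k i + bt k
    let x' : Fin n → ℝ := (∑ i, x i)⁻¹ • x
    (∀ i, 0 ≤ x' i) ∧ (∑ i, x' i = 1) ∧
      l2 (Atil.mulVec x' - bt) < l2 (Atil.mulVec x - bt) := by
  intro bt Atil x'
  have hs : 0 < ∑ i, x i := by
    obtain ⟨j, hj⟩ := Function.ne_iff.mp hx
    exact Finset.sum_pos' (fun i _ => hx0 i)
      ⟨j, Finset.mem_univ j, lt_of_le_of_ne (hx0 j) (Ne.symm hj)⟩
  have hx'0 : ∀ i, 0 ≤ x' i := fun i => mul_nonneg (inv_nonneg.mpr hs.le) (hx0 i)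
  have hx'1 : ∑ i, x' i = 1 := by
    simp only [x', Pi.smul_apply, smul_eq_mul, ← Finset.mul_sum]
    exact inv_mul_cancel₀ hs.ne'
  refine ⟨hx'0, hx'1, ?_⟩
  have hxx : ∀ i, x i = (∑ i, x i) * x' i := by
    intro i
    simp only [x', Pi.smul_apply, smul_eq_mul]
    field_simp
  generalize (∑ i, x i) = s at hs hx1 hxx
  clear_value x'
  obtain ⟨y, hy⟩ : ∃ y : Fin d → ℝ, ∀ k, y k = ∑ i, A k i * x' i := ⟨_, fun _ => rfl⟩
  have h1 : ∀ k, (Atil.mulVec x' - bt) k = y k := by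
    intro k
    simp only [Atil, Pi.sub_apply, Matrix.mulVec, dotProduct, Matrix.of_apply, add_mul,
      Finset.sum_add_distrib, ← Finset.mul_sum, hx'1, hy]
    ring
  have h2 : ∀ k, (Atil.mulVec x - bt) k = s * y k - (1 - s) * bt k := by
    intro k
    have e1 : ∑ i, A k i * x i = s * y k := by
      rw [hy, Finset.mul_sum]
      exact Finset.sum_congr rfl fun i _ => by rw [hxx i]; ring
    have e2 : ∑ i, x i = s := by
      rw [Finset.sum_congr rfl fun i _ => hxx i, ← Finset.mul_sum, hx'1, mul_one]
    simp only [Atil, Pi.sub_apply, Matrix.mulVec, dotProduct, Matrix.of_apply, add_mul,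
      Finset.sum_add_distrib, ← Finset.mul_sum, e1, e2]
    ring
  have hcol : ∀ i, ∑ k, A k i ^ 2 < D ^ 2 := by
    intro i
    have := hAD i
    unfold l2 at this
    rw [Real.sqrt_lt' hD] at this
    exact this
  have hyD : ∑ k, y k ^ 2 < D ^ 2 := by
    have hk : ∀ k, y k ^ 2 ≤ ∑ i, x' i * A k i ^ 2 := by
      intro k
      have h0 : 0 ≤ ∑ i, x' i * (A k i - y k) ^ 2 :=
        Finset.sum_nonneg fun i _ => mul_nonneg (hx'0 i) (sq_nonneg _)
      have e : ∑ i, x' i * (A k i - y k) ^ 2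
          = ∑ i, x' i * A k i ^ 2 - 2 * y k * ∑ i, A k i * x' i + y k ^ 2 * ∑ i, x' i := by
        simp only [Finset.mul_sum, ← Finset.sum_sub_distrib, ← Finset.sum_add_distrib]
        exact Finset.sum_congr rfl fun i _ => by ring
      rw [e, ← hy, hx'1] at h0
      nlinarith
    obtain ⟨j, hj⟩ : ∃ j, 0 < x' j := by
      by_contra! h
      have := Finset.sum_nonpos (s := Finset.univ) fun i _ => h i
      linarith
    calc ∑ k, y k ^ 2 ≤ ∑ k, ∑ i, x' i * A k i ^ 2 := Finset.sum_le_sum fun k _ => hk k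
      _ = ∑ i, x' i * ∑ k, A k i ^ 2 := by
        rw [Finset.sum_comm]
        simp only [Finset.mul_sum]
      _ < ∑ i, x' i * D ^ 2 :=
        Finset.sum_lt_sum (fun i _ => mul_le_mul_of_nonneg_left (hcol i).le (hx'0 i))
          ⟨j, Finset.mem_univ j, mul_lt_mul_of_pos_left (hcol j) hj⟩
      _ = D ^ 2 := by rw [← Finset.sum_mul, hx'1, one_mul]
  have hyb : ∑ k, y k * bt k ≤ -D ^ 2 := by
    have e : ∑ k, y k * bt k = -(D ^ 2 / σ) * ∑ i, x' i * ((Aᵀ i) ⬝ᵥ w / l2 w) := by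
      simp only [hy, bt, dotProduct, Matrix.transpose_apply, Finset.mul_sum, Finset.sum_mul,
        Finset.sum_div]
      rw [Finset.sum_comm]
      exact Finset.sum_congr rfl fun i _ => Finset.sum_congr rfl fun k _ => by ring
    have h : σ ≤ ∑ i, x' i * ((Aᵀ i) ⬝ᵥ w / l2 w) := by
      calc σ = ∑ i, x' i * σ := by rw [← Finset.sum_mul, hx'1, one_mul]
        _ ≤ _ := Finset.sum_le_sum fun i _ => mul_le_mul_of_nonneg_left (hsep i) (hx'0 i)
    have h3 := mul_le_mul_of_nonneg_left h (by positivity : 0 ≤ D ^ 2 / σ)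
    rw [div_mul_cancel₀ _ hσ.ne'] at h3
    rw [e]
    linarith
  unfold l2
  simp only [h1, h2]
  apply Real.sqrt_lt_sqrt (Finset.sum_nonneg fun k _ => sq_nonneg _)
  have h0 : 0 ≤ ∑ k, ((s * y k - (1 - s) * bt k) - y k) ^ 2 :=
    Finset.sum_nonneg fun k _ => sq_nonneg _
  have e : ∑ k, ((s * y k - (1 - s) * bt k) - y k) ^ 2
      = ∑ k, (s * y k - (1 - s) * bt k) ^ 2 - 2 * s * ∑ k, y k ^ 2
        + 2 * (1 - s) * ∑ k, y k * bt k + ∑ k, y k ^ 2 := by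
    simp only [Finset.mul_sum, ← Finset.sum_sub_distrib, ← Finset.sum_add_distrib]
    exact Finset.sum_congr rfl fun i _ => by ring
  rw [e] at h0
  have h4 : (1 - s) * (∑ k, y k * bt k + ∑ k, y k ^ 2) < 0 :=
    mul_neg_of_pos_of_neg (by linarith) (by linarith)
  linarith
end

section
/- (Main Theorem) For every candidate solution x ∈ ℝⁿ with ‖x‖₁ ≤ 1 of the Lasso instance (Ã, b̃), there exists a vector x' in the unit simplex Δ whose Lasso objective is at least as good, ‖Ãx' − b̃‖₂ ≤ ‖Ãx − b̃‖₂, and moreover this x' attains the same value in the original SVM problem: ‖Ãx' − b̃‖₂ = ‖Ax'‖₂. -/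
open Matrix BigOperators

/-- Main Theorem: for every candidate solution `x` with `‖x‖₁ ≤ 1` of the Lasso instance
`(Ã, b̃)` (with `b̃ = −(D²/σ)·w/‖w‖₂`, `Ã = A + b̃·1ᵀ`), there is a vector `x'` in the
unit simplex with the same or better Lasso objective value, and this `x'` attains the
same value in the original SVM problem: `‖Ãx' − b̃‖₂ = ‖Ax'‖₂`. -/
theorem svm_lasso_main {d n : ℕ} (hn : 0 < n) (A : Matrix (Fin d) (Fin n) ℝ)
    (σ D : ℝ) (hσ : 0 < σ) (hD : 0 < D)
    (w : Fin d → ℝ) (hw : w ≠ 0)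
    (hsep : ∀ i, (Aᵀ i) ⬝ᵥ w / l2 w ≥ σ)
    (hAD : ∀ i, l2 (Aᵀ i) < D)
    (x : Fin n → ℝ) (hx : ∑ i, |x i| ≤ 1) :
    let bt : Fin d → ℝ := fun k => -(D ^ 2 / σ) * (w k / l2 w)
    let Atil : Matrix (Fin d) (Fin n) ℝ := Matrix.of fun k i => A k i + bt k
    ∃ x' : Fin n → ℝ, (∀ i, 0 ≤ x' i) ∧ (∑ i, x' i = 1) ∧
      l2 (Atil.mulVec x' - bt) ≤ l2 (Atil.mulVec x - bt) ∧
      l2 (Atil.mulVec x' - bt) = l2 (A.mulVec x') := by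
  intro bt Atil
  set r : ℝ := 1 - ∑ i, |x i| with hr
  have hr0 : 0 ≤ r := by linarith
  set y' : Fin n → ℝ := fun i => |x i| + (if i = ⟨0, hn⟩ then r else 0) with hy'
  have hpos : ∀ i, 0 ≤ y' i := by
    intro i
    simp only [hy']
    split_ifs <;> positivity
  have hge : ∀ i, 0 ≤ y' i - x i := by
    intro i
    have := le_abs_self (x i)
    simp only [hy']
    split_ifs <;> linarith
  have hsum : ∑ i, y' i = 1 := by
    simp only [hy', Finset.sum_add_distrib]
    simp [hr]
  have hAt : ∀ (z : Fin n → ℝ) (k : Fin d),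
      (Atil.mulVec z - bt) k = A.mulVec z k + bt k * (∑ i, z i) - bt k := by
    intro z k
    simp only [Pi.sub_apply, Matrix.mulVec, dotProduct, Atil, Matrix.of_apply, add_mul,
      Finset.sum_add_distrib, Finset.mul_sum]
  have heq : Atil.mulVec y' - bt = A.mulVec y' := by
    funext k
    rw [hAt, hsum]
    ring
  refine ⟨y', hpos, hsum, ?_, by rw [heq]⟩
  rw [heq]
  unfold l2
  apply Real.sqrt_le_sqrt
  set y := A.mulVec y' with hy
  have hyk : ∀ k, y k = ∑ j, A k j * y' j := fun k => rfl
  have hsq : ∀ i, ∑ k, A k i ^ 2 ≤ D ^ 2 := by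
    intro i
    have h := (hAD i).le
    unfold l2 at h
    exact (Real.sqrt_le_left hD.le).1 h
  have hAA : ∀ i j, ∑ k, A k i * A k j ≤ D ^ 2 := by
    intro i j
    have h : ∑ k, 2 * (A k i * A k j) ≤ ∑ k, (A k i ^ 2 + A k j ^ 2) :=
      Finset.sum_le_sum fun k _ => by nlinarith [sq_nonneg (A k i - A k j)]
    rw [← Finset.mul_sum, Finset.sum_add_distrib] at h
    linarith [hsq i, hsq j]
  -- exchanging sums: inner product of a vector with `y`
  have hex : ∀ v : Fin d → ℝ, ∑ k, y k * v k = ∑ j, y' j * ∑ k, v k * A k j := by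
    intro v
    simp only [hyk, Finset.sum_mul, Finset.mul_sum]
    rw [Finset.sum_comm]
    exact Finset.sum_congr rfl fun j _ => Finset.sum_congr rfl fun k _ => by ring
  have hyA : ∀ i, ∑ k, y k * A k i ≤ D ^ 2 := by
    intro i
    rw [hex]
    calc ∑ j, y' j * ∑ k, A k i * A k j ≤ ∑ j, y' j * D ^ 2 :=
          Finset.sum_le_sum fun j _ => mul_le_mul_of_nonneg_left (hAA i j) (hpos j)
      _ = D ^ 2 := by rw [← Finset.sum_mul, hsum, one_mul]
  have hbA : ∀ j, D ^ 2 ≤ ∑ k, (-bt k) * A k j := by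
    intro j
    have h1 : ∑ k, (-bt k) * A k j = (D ^ 2 / σ) * ((Aᵀ j) ⬝ᵥ w / l2 w) := by
      simp only [dotProduct, Finset.sum_div, Finset.mul_sum, bt, Matrix.transpose_apply]
      exact Finset.sum_congr rfl fun k _ => by ring
    rw [h1]
    calc D ^ 2 = (D ^ 2 / σ) * σ := by field_simp
      _ ≤ _ := mul_le_mul_of_nonneg_left (hsep j) (by positivity)
  have hyb : D ^ 2 ≤ ∑ k, y k * (-bt k) := by
    rw [hex]
    calc D ^ 2 = ∑ j, y' j * D ^ 2 := by rw [← Finset.sum_mul, hsum, one_mul]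
      _ ≤ _ := Finset.sum_le_sum fun j _ => mul_le_mul_of_nonneg_left (hbA j) (hpos j)
  have hz : ∀ k, (Atil.mulVec x - bt) k - y k = ∑ i, (y' i - x i) * (-bt k - A k i) := by
    intro k
    have h2 : ∑ i, (y' i - x i) * (-bt k - A k i)
        = ∑ i, (-bt k * y' i + bt k * x i - A k i * y' i + A k i * x i) :=
      Finset.sum_congr rfl fun i _ => by ring
    rw [h2, hAt, hyk, Finset.sum_add_distrib, Finset.sum_sub_distrib, Finset.sum_add_distrib,
      ← Finset.mul_sum, ← Finset.mul_sum, hsum]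
    simp only [Matrix.mulVec, dotProduct]
    ring
  have hin : 0 ≤ ∑ k, y k * ((Atil.mulVec x - bt) k - y k) := by
    have h3 : ∑ k, y k * ((Atil.mulVec x - bt) k - y k)
        = ∑ i, (y' i - x i) * (∑ k, y k * (-bt k) - ∑ k, y k * A k i) := by
      simp only [hz, Finset.mul_sum, ← Finset.sum_sub_distrib]
      rw [Finset.sum_comm]
      exact Finset.sum_congr rfl fun j _ => Finset.sum_congr rfl fun k _ => by ring
    rw [h3]
    exact Finset.sum_nonneg fun i _ => mul_nonneg (hge i) (by linarith [hyA i])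
  have hfin : ∑ k, (y k ^ 2 + 2 * (y k * ((Atil.mulVec x - bt) k - y k)))
      ≤ ∑ k, (Atil.mulVec x - bt) k ^ 2 :=
    Finset.sum_le_sum fun k _ => by nlinarith [sq_nonneg ((Atil.mulVec x - bt) k - y k)]
  rw [Finset.sum_add_distrib, ← Finset.mul_sum] at hfin
  linarith
end

section
/- (SVM ⪯ Lasso, equality of optimal values) The constructed Lasso instance has the same optimal value as the original SVM: min over x ∈ ℝⁿ with ‖x‖₁ ≤ 1 of ‖Ãx − b̃‖₂² equals min over x in the unit simplex Δ of ‖Ax‖₂² (both minima are attained since the feasible sets are compact). -/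
open Matrix BigOperators

/-- SVM ⪯ Lasso, equality of optimal values: the constructed Lasso instance `(Ã, b̃)`
(with `b̃ = −(D²/σ)·w/‖w‖₂`, `Ã = A + b̃·1ᵀ`) has the same optimal value as the original
SVM: `min_{‖x‖₁ ≤ 1} ‖Ãx − b̃‖₂² = min_{x ∈ Δ} ‖Ax‖₂²`. -/
theorem svm_lasso_equal_optima {d n : ℕ} (hn : 0 < n) (A : Matrix (Fin d) (Fin n) ℝ)
    (σ D : ℝ) (hσ : 0 < σ) (hD : 0 < D)
    (w : Fin d → ℝ) (hw : w ≠ 0)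
    (hsep : ∀ i, (Aᵀ i) ⬝ᵥ w / l2 w ≥ σ)
    (hAD : ∀ i, l2 (Aᵀ i) < D) :
    let bt : Fin d → ℝ := fun k => -(D ^ 2 / σ) * (w k / l2 w)
    let Atil : Matrix (Fin d) (Fin n) ℝ := Matrix.of fun k i => A k i + bt k
    sInf {v : ℝ | ∃ x : Fin n → ℝ, (∑ i, |x i| ≤ 1) ∧
        v = ∑ k, (Atil.mulVec x k - bt k) ^ 2} =
    sInf {v : ℝ | ∃ x : Fin n → ℝ, (∀ i, 0 ≤ x i) ∧ (∑ i, x i = 1) ∧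
        v = ∑ k, (A.mulVec x k) ^ 2} := by
  intro bt Atil
  have hwpos : 0 < l2 w := by
    unfold l2
    apply Real.sqrt_pos.mpr
    obtain ⟨k, hk⟩ := Function.ne_iff.mp hw
    exact Finset.sum_pos' (fun _ _ => sq_nonneg _) ⟨k, Finset.mem_univ _, by
      have : w k ≠ 0 := hk
      positivity⟩
  have hnorm : ∀ i, ∑ k, A k i ^ 2 ≤ D ^ 2 := by
    intro i
    have h := (hAD i).le
    unfold l2 at h
    exact (Real.sqrt_le_left hD.le).mp h
  have hgram : ∀ i j, ∑ k, A k i * A k j ≤ D ^ 2 := by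
    intro i j
    have h : ∑ k, A k i * A k j ≤ ∑ k, (A k i ^ 2 + A k j ^ 2) / 2 :=
      Finset.sum_le_sum fun k _ => by nlinarith [sq_nonneg (A k i - A k j)]
    rw [← Finset.sum_div, Finset.sum_add_distrib] at h
    linarith [hnorm i, hnorm j]
  have hu : ∀ i, ∑ k, A k i * bt k ≤ -D ^ 2 := by
    intro i
    have h : ∑ k, A k i * bt k = -(D ^ 2 / σ) * ((Aᵀ i) ⬝ᵥ w / l2 w) := by
      simp only [dotProduct, Finset.sum_div, Finset.mul_sum, bt, Matrix.transpose_apply]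
      exact Finset.sum_congr rfl fun k _ => by ring
    rw [h]
    have h2 := mul_le_mul_of_nonneg_left (hsep i) (by positivity : 0 ≤ D ^ 2 / σ)
    rw [div_mul_cancel₀ _ hσ.ne'] at h2
    linarith
  have hres : ∀ (x : Fin n → ℝ) k, Atil.mulVec x k = A.mulVec x k + (∑ i, x i) * bt k := by
    intro x k
    simp only [Atil, Matrix.mulVec, dotProduct, Matrix.of_apply, add_mul,
      Finset.sum_add_distrib, Finset.sum_mul]
    congr 1
    exact Finset.sum_congr rfl fun i _ => by ring
  have key : ∀ x : Fin n → ℝ, (∑ i, |x i| ≤ 1) → ∃ y : Fin n → ℝ, (∀ i, 0 ≤ y i) ∧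
      (∑ i, y i = 1) ∧ ∑ k, (A.mulVec y k) ^ 2 ≤ ∑ k, (Atil.mulVec x k - bt k) ^ 2 := by
    intro x hx
    let j : Fin n := ⟨0, hn⟩
    have hP : ∑ i, max (x i) 0 ≤ 1 :=
      (Finset.sum_le_sum fun i _ => max_le (le_abs_self _) (abs_nonneg _)).trans hx
    obtain ⟨y, hy⟩ : ∃ y : Fin n → ℝ, y = fun i => max (x i) 0 +
      if i = j then 1 - ∑ i, max (x i) 0 else 0 := ⟨_, rfl⟩
    have hyge : ∀ i, max (x i) 0 ≤ y i := by
      intro i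
      rw [hy]
      dsimp only
      split_ifs <;> linarith
    have hy0 : ∀ i, 0 ≤ y i := fun i => (le_max_right _ _).trans (hyge i)
    have hyx : ∀ i, 0 ≤ y i - x i := fun i => sub_nonneg.mpr ((le_max_left _ _).trans (hyge i))
    have hy1 : ∑ i, y i = 1 := by
      rw [hy]
      simp [Finset.sum_add_distrib]
    refine ⟨y, hy0, hy1, ?_⟩
    have hr : ∀ k, Atil.mulVec x k - bt k
        = A.mulVec y k - ∑ i, (y i - x i) * (A k i + bt k) := by
      intro k
      have h1 : ∑ i, (y i - x i) * (A k i + bt k)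
          = Atil.mulVec y k - Atil.mulVec x k := by
        simp only [Atil, Matrix.mulVec, dotProduct, Matrix.of_apply, ← Finset.sum_sub_distrib]
        exact Finset.sum_congr rfl fun i _ => by ring
      rw [h1, hres y, hy1]
      ring
    have hin : ∑ k, A.mulVec y k * ∑ i, (y i - x i) * (A k i + bt k) ≤ 0 := by
      have h1 : ∑ k, A.mulVec y k * ∑ i, (y i - x i) * (A k i + bt k)
          = ∑ i, (y i - x i) * ∑ l, y l * (∑ k, A k l * A k i + ∑ k, A k l * bt k) := by
        simp only [← Finset.sum_add_distrib, Matrix.mulVec, dotProduct, Finset.mul_sum,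
          Finset.sum_mul]
        rw [Finset.sum_comm]
        refine Finset.sum_congr rfl fun i _ => ?_
        rw [Finset.sum_comm]
        refine Finset.sum_congr rfl fun l _ => ?_
        refine Finset.sum_congr rfl fun k _ => ?_
        ring
      rw [h1]
      refine Finset.sum_nonpos fun i _ => mul_nonpos_of_nonneg_of_nonpos (hyx i) ?_
      refine Finset.sum_nonpos fun l _ => mul_nonpos_of_nonneg_of_nonpos (hy0 l) ?_
      linarith [hgram l i, hu l]
    have hfin : ∑ k, (A.mulVec y k) ^ 2
        - 2 * ∑ k, A.mulVec y k * ∑ i, (y i - x i) * (A k i + bt k)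
        ≤ ∑ k, (Atil.mulVec x k - bt k) ^ 2 := by
      rw [Finset.mul_sum, ← Finset.sum_sub_distrib]
      refine Finset.sum_le_sum fun k _ => ?_
      rw [hr k]
      nlinarith [sq_nonneg (∑ i, (y i - x i) * (A k i + bt k))]
    linarith
  have hb : BddBelow {v : ℝ | ∃ x : Fin n → ℝ, (∀ i, 0 ≤ x i) ∧ (∑ i, x i = 1) ∧
        v = ∑ k, (A.mulVec x k) ^ 2} :=
    ⟨0, by rintro v ⟨x, -, -, rfl⟩; exact Finset.sum_nonneg fun _ _ => sq_nonneg _⟩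
  apply le_antisymm
  · apply csInf_le_csInf
    · exact ⟨0, by rintro v ⟨x, -, rfl⟩; exact Finset.sum_nonneg fun _ _ => sq_nonneg _⟩
    · obtain ⟨y, h0, h1, -⟩ := key 0 (by simp)
      exact ⟨_, y, h0, h1, rfl⟩
    · rintro v ⟨x, h0, h1, rfl⟩
      refine ⟨x, ?_, ?_⟩
      · simp only [abs_of_nonneg (h0 _)]
        exact h1.le
      · refine Finset.sum_congr rfl fun k _ => ?_
        rw [hres, h1]
        ring
  · apply le_csInf
    · exact ⟨_, 0, by simp, rfl⟩
    · rintro v ⟨x, hx, rfl⟩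
      obtain ⟨y, h0, h1, h2⟩ := key x hx
      exact (csInf_le hb ⟨y, h0, h1, rfl⟩).trans h2
end

section
/- All optimal solutions of the constructed Lasso instance lie in the unit simplex: if x* ∈ ℝⁿ satisfies ‖x*‖₁ ≤ 1 and ‖Ãx* − b̃‖₂ ≤ ‖Ãx − b̃‖₂ for all x with ‖x‖₁ ≤ 1, then x* ≥ 0 entrywise and Σ_i x*_i = 1, i.e. x* ∈ Δ. In particular the optimal solutions of the Lasso instance (Ã, b̃) over the ℓ1-ball and of the SVM min_{x∈Δ}‖Ax‖₂² coincide. -/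
open Matrix BigOperators

lemma wsum_pos {n : ℕ} (y g : Fin n → ℝ) (hy : ∀ i, 0 ≤ y i) (hs : 0 < ∑ i, y i)
    (hg : ∀ i, 0 < g i) : 0 < ∑ i, y i * g i := by
  obtain ⟨i, hi, hpos⟩ : ∃ i ∈ Finset.univ, 0 < y i := by
    by_contra! h
    exact absurd (Finset.sum_nonpos h) (not_le.mpr hs)
  exact Finset.sum_pos' (fun j _ => mul_nonneg (hy j) (hg j).le) ⟨i, hi, mul_pos hpos (hg i)⟩

lemma exists_better {d n : ℕ} (hn : 0 < n) (A : Matrix (Fin d) (Fin n) ℝ) (bt : Fin d → ℝ)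
    (hG : ∀ j i, 0 < ∑ k, A k j * (-bt k - A k i))
    (x : Fin n → ℝ) (hx : ∑ i, |x i| ≤ 1) (hs : ∑ i, x i < 1) :
    ∃ y : Fin n → ℝ, (∀ i, 0 ≤ y i) ∧ ∑ i, y i = 1 ∧
      l2 (A.mulVec y) < l2 ((Matrix.of fun k i => A k i + bt k).mulVec x - bt) := by
  have hP : ∑ i, max (x i) 0 ≤ 1 :=
    le_trans (Finset.sum_le_sum fun i _ => max_le (le_abs_self _) (abs_nonneg _)) hx
  set P := ∑ i, max (x i) 0 with hPdef
  let e : Fin n → ℝ := fun i => if i = ⟨0, hn⟩ then 1 - P else 0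
  have he : ∀ i, 0 ≤ e i := by
    intro i
    simp only [e]
    split_ifs <;> linarith
  have hes : ∑ i, e i = 1 - P := by simp [e]
  let y : Fin n → ℝ := fun i => max (x i) 0 + e i
  have hy : ∀ i, 0 ≤ y i := fun i => add_nonneg (le_max_right _ _) (he i)
  have hys : ∑ i, y i = 1 := by
    simp only [y, Finset.sum_add_distrib, hes, ← hPdef]; ring
  have hz : ∀ i, 0 ≤ y i - x i := fun i => by
    have := le_max_left (x i) 0
    have := he i
    simp only [y]; linarith
  have hzs : 0 < ∑ i, (y i - x i) := by
    rw [Finset.sum_sub_distrib, hys]; linarith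
  refine ⟨y, hy, hys, ?_⟩
  set q := A.mulVec y with hq
  set r := (Matrix.of fun k i => A k i + bt k).mulVec x - bt with hr
  have hqk : ∀ k, q k = ∑ i, A k i * y i := fun k => rfl
  have hrk : ∀ k, r k - q k = ∑ i, (y i - x i) * (-bt k - A k i) := by
    intro k
    have h1 : r k = ∑ i, (A k i + bt k) * x i - bt k := rfl
    have h2 : bt k = ∑ i, y i * bt k := by rw [← Finset.sum_mul, hys, one_mul]
    rw [h1, hqk]
    nth_rewrite 2 [h2]
    rw [← Finset.sum_sub_distrib, ← Finset.sum_sub_distrib]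
    exact Finset.sum_congr rfl fun i _ => by ring
  have hqi : ∀ i, 0 < ∑ k, q k * (-bt k - A k i) := by
    intro i
    have := wsum_pos y (fun j => ∑ k, A k j * (-bt k - A k i)) hy (by rw [hys]; norm_num)
      (fun j => hG j i)
    convert this using 1
    simp only [hqk, Finset.sum_mul, Finset.mul_sum]
    rw [Finset.sum_comm]
    exact Finset.sum_congr rfl fun j _ => Finset.sum_congr rfl fun k _ => by ring
  have hin : 0 < ∑ k, q k * (r k - q k) := by
    have := wsum_pos (fun i => y i - x i) (fun i => ∑ k, q k * (-bt k - A k i)) hz hzs hqi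
    convert this using 1
    simp only [hrk, Finset.mul_sum]
    rw [Finset.sum_comm]
    exact Finset.sum_congr rfl fun j _ => Finset.sum_congr rfl fun k _ => by ring
  have hsq : 0 ≤ ∑ k, (r k - q k) ^ 2 := Finset.sum_nonneg fun k _ => sq_nonneg _
  have hexp : ∑ k, r k ^ 2 = ∑ k, q k ^ 2 + 2 * ∑ k, q k * (r k - q k)
      + ∑ k, (r k - q k) ^ 2 := by
    rw [Finset.mul_sum, ← Finset.sum_add_distrib, ← Finset.sum_add_distrib]
    exact Finset.sum_congr rfl fun k _ => by ring
  exact Real.sqrt_lt_sqrt (Finset.sum_nonneg fun k _ => sq_nonneg _) (by linarith)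

lemma ball_sum {n : ℕ} (x : Fin n → ℝ) (hx : ∑ i, |x i| ≤ 1) :
    ((∀ i, 0 ≤ x i) ∧ ∑ i, x i = 1) ∨ ∑ i, x i < 1 := by
  by_cases h : ∑ i, x i < 1
  · exact Or.inr h
  · left
    have hle : ∑ i, x i ≤ ∑ i, |x i| := Finset.sum_le_sum fun i _ => le_abs_self _
    have heq : ∑ i, x i = ∑ i, |x i| := by linarith
    refine ⟨fun i => ?_, by linarith⟩
    have := (Finset.sum_eq_sum_iff_of_le (fun i _ => le_abs_self (x i))).1 heq i
      (Finset.mem_univ i)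
    rw [this]; exact abs_nonneg _

/-- All optimal solutions of the constructed Lasso instance `(Ã, b̃)` (with
`b̃ = −(D²/σ)·w/‖w‖₂`, `Ã = A + b̃·1ᵀ`) lie in the unit simplex; in particular the set of
optimal Lasso solutions over the ℓ1-ball coincides with the set of optimal SVM solutions
of `min_{x ∈ Δ} ‖Ax‖₂²`. -/
theorem lasso_optima_in_simplex {d n : ℕ} (hn : 0 < n) (A : Matrix (Fin d) (Fin n) ℝ)
    (σ D : ℝ) (hσ : 0 < σ) (hD : 0 < D)
    (w : Fin d → ℝ) (hw : w ≠ 0)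
    (hsep : ∀ i, (Aᵀ i) ⬝ᵥ w / l2 w ≥ σ)
    (hAD : ∀ i, l2 (Aᵀ i) < D) :
    let bt : Fin d → ℝ := fun k => -(D ^ 2 / σ) * (w k / l2 w)
    let Atil : Matrix (Fin d) (Fin n) ℝ := Matrix.of fun k i => A k i + bt k
    (∀ xs : Fin n → ℝ, (∑ i, |xs i| ≤ 1) →
      (∀ x : Fin n → ℝ, (∑ i, |x i| ≤ 1) →
        l2 (Atil.mulVec xs - bt) ≤ l2 (Atil.mulVec x - bt)) →
      (∀ i, 0 ≤ xs i) ∧ (∑ i, xs i = 1)) ∧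
    {xs : Fin n → ℝ | (∑ i, |xs i| ≤ 1) ∧
        ∀ x : Fin n → ℝ, (∑ i, |x i| ≤ 1) →
          l2 (Atil.mulVec xs - bt) ≤ l2 (Atil.mulVec x - bt)} =
    {xs : Fin n → ℝ | ((∀ i, 0 ≤ xs i) ∧ (∑ i, xs i = 1)) ∧
        ∀ x : Fin n → ℝ, (∀ i, 0 ≤ x i) → (∑ i, x i = 1) →
          l2 (A.mulVec xs) ≤ l2 (A.mulVec x)} := by
  intro bt Atil
  have hG : ∀ j i, 0 < ∑ k, A k j * (-bt k - A k i) := by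
    intro j i
    have h1 : ∑ k, A k j * (-bt k - A k i)
        = D ^ 2 / σ * ((Aᵀ j) ⬝ᵥ w / l2 w) - ∑ k, A k j * A k i := by
      simp only [dotProduct, Matrix.transpose_apply, Finset.sum_div, Finset.mul_sum]
      rw [← Finset.sum_sub_distrib]
      exact Finset.sum_congr rfl fun k _ => by simp only [bt]; ring
    have h2 : D ^ 2 ≤ D ^ 2 / σ * ((Aᵀ j) ⬝ᵥ w / l2 w) := by
      calc D ^ 2 = D ^ 2 / σ * σ := by field_simp
        _ ≤ _ := mul_le_mul_of_nonneg_left (hsep j) (by positivity)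
    have h3 : ∑ k, A k j * A k i ≤ l2 (Aᵀ j) * l2 (Aᵀ i) :=
      Real.sum_mul_le_sqrt_mul_sqrt _ _ _
    have h4 : l2 (Aᵀ j) * l2 (Aᵀ i) < D * D :=
      mul_lt_mul'' (hAD j) (hAD i) (Real.sqrt_nonneg _) (Real.sqrt_nonneg _)
    rw [h1]; nlinarith
  have hbetter := exists_better hn A bt hG
  have hball : ∀ x : Fin n → ℝ, (∀ i, 0 ≤ x i) → ∑ i, x i = 1 → ∑ i, |x i| ≤ 1 := by
    intro x h0 h1
    rw [← h1]
    exact (Finset.sum_congr rfl fun i _ => abs_of_nonneg (h0 i)).le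
  have hres : ∀ x : Fin n → ℝ, ∑ i, x i = 1 → Atil.mulVec x - bt = A.mulVec x := by
    intro x h1
    funext k
    change ∑ i, (A k i + bt k) * x i - bt k = ∑ i, A k i * x i
    simp only [add_mul, Finset.sum_add_distrib, ← Finset.mul_sum, h1]
    ring
  have hfirst : ∀ xs : Fin n → ℝ, (∑ i, |xs i| ≤ 1) →
      (∀ x : Fin n → ℝ, (∑ i, |x i| ≤ 1) →
        l2 (Atil.mulVec xs - bt) ≤ l2 (Atil.mulVec x - bt)) →
      (∀ i, 0 ≤ xs i) ∧ (∑ i, xs i = 1) := by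
    intro xs hxs hopt
    rcases ball_sum xs hxs with h | h
    · exact h
    · obtain ⟨y, hy0, hy1, hlt⟩ := hbetter xs hxs h
      have := hopt y (hball y hy0 hy1)
      rw [hres y hy1] at this
      exact absurd hlt (not_lt.mpr this)
  refine ⟨hfirst, ?_⟩
  ext xs
  constructor
  · rintro ⟨hxs, hopt⟩
    have h := hfirst xs hxs hopt
    refine ⟨h, fun x h0 h1 => ?_⟩
    have := hopt x (hball x h0 h1)
    rwa [hres x h1, hres xs h.2] at this
  · rintro ⟨⟨h0, h1⟩, hopt⟩
    refine ⟨hball xs h0 h1, fun x hx => ?_⟩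
    rw [hres xs h1]
    rcases ball_sum x hx with h | h
    · rw [hres x h.2]; exact hopt x h.1 h.2
    · obtain ⟨y, hy0, hy1, hlt⟩ := hbetter x hx h
      exact (hopt y hy0 hy1).trans hlt.le
end
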